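/- arXiv:2306.16183 — 2 statements merged into one kernel-verified Lean document; each statement's English description precedes it below -/
import Mathlib

section
/- Let s > 0 and let Ω ⊆ ℝⁿ be a convex open set. For all F, G ∈ F^s(Ω) and all λ ≥ 0: (i) F + G ∈ F^s(Ω) with ‖F + G‖_{Ḟ^s(Ω)} ≤ ‖F‖_{Ḟ^s(Ω)} + ‖G‖_{Ḟ^s(Ω)}; (ii) λF ∈ F^s(Ω) with ‖λF‖_{Ḟ^s(Ω)} = λ‖F‖_{Ḟ^s(Ω)}; and (iii) there is a constant C depending only on n, s such that FG ∈ F^s(Ω) and ‖FG‖_{F^s(Ω)} ≤ C · ‖F‖_{F^s(Ω)} · ‖G‖_{F^s(Ω)}. -/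
open Set ENNReal
open scoped NNReal

noncomputable section

/-- The largest integer strictly less than `s` (for `s > 0`). -/
def lowFloor (s : ℝ) : ℕ := ⌈s⌉₊ - 1

variable {E : Type*} [NormedAddCommGroup E] [NormedSpace ℝ E]

/-- `max_{0 ≤ m < s} sup_{x ∈ Ω} |∇^m F(x)|`, valued in `ℝ≥0∞`. -/
def derivSup (s : ℝ) (Ω : Set E) (F : E → ℝ) : ℝ≥0∞ :=
  ⨆ (m : ℕ) (_ : m ≤ lowFloor s) (x : E) (_ : x ∈ Ω),
    (‖iteratedFDerivWithin ℝ m F Ω x‖₊ : ℝ≥0∞)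

/-- The homogeneous Hölder seminorm `‖F‖_{Ċ^s(Ω)}`, valued in `ℝ≥0∞`. -/
def holderSemi (s : ℝ) (Ω : Set E) (F : E → ℝ) : ℝ≥0∞ :=
  ⨆ (x : E) (_ : x ∈ Ω) (y : E) (_ : y ∈ Ω) (_ : x ≠ y),
    (‖iteratedFDerivWithin ℝ (lowFloor s) F Ω x
        - iteratedFDerivWithin ℝ (lowFloor s) F Ω y‖₊ : ℝ≥0∞)
      / ENNReal.ofReal (‖x - y‖ ^ (s - (lowFloor s : ℝ)))

/-- The Hölder norm `‖F‖_{C^s(Ω)}`, valued in `ℝ≥0∞`. -/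
def csNorm (s : ℝ) (Ω : Set E) (F : E → ℝ) : ℝ≥0∞ :=
  derivSup s Ω F + holderSemi s Ω F

/-- Membership in `C^s(Ω)`. -/
def MemCs (s : ℝ) (Ω : Set E) (F : E → ℝ) : Prop :=
  ContDiffOn ℝ (lowFloor s : ℕ∞) F Ω ∧ csNorm s Ω F ≠ ∞

/-- The flat seminorm `‖F‖_{Ḟ^s(Ω)}`, valued in `ℝ≥0∞`.  (In `ℝ≥0∞` one has
`0/0 = 0` and `a/0 = ∞` for `a ≠ 0`, matching the paper's conventions; for
`0 < s < 1` the supremum is empty, hence `0`.) -/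
def flatSemi (s : ℝ) (Ω : Set E) (F : E → ℝ) : ℝ≥0∞ :=
  ⨆ (m : ℕ) (_ : 1 ≤ m) (_ : m ≤ lowFloor s) (x : E) (_ : x ∈ Ω),
    ((‖iteratedFDerivWithin ℝ m F Ω x‖₊ : ℝ≥0∞) ^ s
      / ENNReal.ofReal (F x) ^ (s - (m : ℝ))) ^ (1 / (m : ℝ))

/-- Membership in the cone `F^s(Ω)`. -/
def MemFs (s : ℝ) (Ω : Set E) (F : E → ℝ) : Prop :=
  MemCs s Ω F ∧ (∀ x ∈ Ω, 0 ≤ F x) ∧ flatSemi s Ω F ≠ ∞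

/-- The norm `‖F‖_{F^s(Ω)} = ‖F‖_{C^s(Ω)} + ‖F‖_{Ḟ^s(Ω)}`. -/
def fsNorm (s : ℝ) (Ω : Set E) (F : E → ℝ) : ℝ≥0∞ :=
  csNorm s Ω F + flatSemi s Ω F

/-- `sup_{x ∈ Ω} |F(x)|`, valued in `ℝ≥0∞`. -/
def supNormSet (Ω : Set E) (F : E → ℝ) : ℝ≥0∞ :=
  ⨆ (x : E) (_ : x ∈ Ω), (‖F x‖₊ : ℝ≥0∞)

/-- `P` is (the function given by) a polynomial of degree at most `D`. -/
def IsPolyDeg (D : ℕ) (P : E → ℝ) : Prop :=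
  ContDiff ℝ (⊤ : ℕ∞) P ∧ ∀ x, iteratedFDeriv ℝ (D + 1) P x = 0

/-- The degree-`D` Taylor polynomial (jet) of `F` at `x`, as a function. -/
def jetAt (D : ℕ) (F : E → ℝ) (x : E) : E → ℝ :=
  fun y => ∑ m ∈ Finset.range (D + 1),
    (iteratedFDeriv ℝ m F x fun _ => y - x) / m.factorial

/-- The degree-`D` Taylor polynomial of `F` at `x` using derivatives within `Ω`. -/
def jetWithinAt (D : ℕ) (F : E → ℝ) (Ω : Set E) (x : E) : E → ℝ :=
  fun y => ∑ m ∈ Finset.range (D + 1),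
    (iteratedFDerivWithin ℝ m F Ω x fun _ => y - x) / m.factorial

/-- The pointwise flatness quantity `max_{1≤m<s} (|∇^m P(x)|^s / P(x)^{s-m})^{1/m}`. -/
def jetFlatAt (s : ℝ) (P : E → ℝ) (x : E) : ℝ≥0∞ :=
  ⨆ (m : ℕ) (_ : 1 ≤ m) (_ : m ≤ lowFloor s),
    ((‖iteratedFDeriv ℝ m P x‖₊ : ℝ≥0∞) ^ s
      / ENNReal.ofReal (P x) ^ (s - (m : ℝ))) ^ (1 / (m : ℝ))

/-- The set `Γ(x₀, M)` of flat nonnegative jets. -/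
def Gamma (s : ℝ) (x₀ : E) (M : ℝ) : Set (E → ℝ) :=
  {P | IsPolyDeg (lowFloor s) P ∧ 0 ≤ P x₀ ∧
    (∀ m ≤ lowFloor s, ‖iteratedFDeriv ℝ m P x₀‖ ≤ M) ∧
    jetFlatAt s P x₀ ≤ ENNReal.ofReal M}

/-- `‖P⃗‖_{J C^s(E)}` for a family of jets `P : E → (E → ℝ)`. -/
def jetCNorm (s : ℝ) (Eset : Set E) (P : E → E → ℝ) : ℝ≥0∞ :=
  (⨆ (x : E) (_ : x ∈ Eset) (m : ℕ) (_ : m ≤ lowFloor s),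
      (‖iteratedFDeriv ℝ m (P x) x‖₊ : ℝ≥0∞))
  + ⨆ (x : E) (_ : x ∈ Eset) (y : E) (_ : y ∈ Eset) (_ : x ≠ y)
      (m : ℕ) (_ : m ≤ lowFloor s),
      (‖iteratedFDeriv ℝ m (P x - P y) y‖₊ : ℝ≥0∞)
        / ENNReal.ofReal (‖x - y‖ ^ (s - (m : ℝ)))

/-- `‖P⃗‖_{J Ḟ^s(E)}` for a family of jets. -/
def jetFlatNorm (s : ℝ) (Eset : Set E) (P : E → E → ℝ) : ℝ≥0∞ :=
  ⨆ (x : E) (_ : x ∈ Eset) (m : ℕ) (_ : 1 ≤ m) (_ : m ≤ lowFloor s),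
    ((‖iteratedFDeriv ℝ m (P x) x‖₊ : ℝ≥0∞) ^ s
      / ENNReal.ofReal |P x x| ^ (s - (m : ℝ))) ^ (1 / (m : ℝ))

/-- `‖P⃗‖_{J F^s(E)}`. -/
def jetFsNorm (s : ℝ) (Eset : Set E) (P : E → E → ℝ) : ℝ≥0∞ :=
  jetCNorm s Eset P + jetFlatNorm s Eset P

/-- The trace norm `‖f‖_{F^s(S)}` (with `inf ∅ = ∞`). -/
def traceNorm (s : ℝ) (S : Set E) (f : E → ℝ) : ℝ≥0∞ :=
  ⨅ (F : E → ℝ) (_ : MemFs s (univ : Set E) F ∧ ∀ x ∈ S, F x = f x),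
    fsNorm s (univ : Set E) F

/-! Put `θ = m / s`. The flat seminorm of `F` is the least `A` with
`|∇^m F| ≤ A ^ θ * F ^ (1 - θ)` for `1 ≤ m < s`. Hölder's inequality for two-term sums makes this
`A` subadditive in `F`, and it is homogeneous because the exponents add up to `1`. For products,
`F ≤ ‖F‖` lets one trade powers of `F` for powers of `‖F‖`, so that `∇^i F` satisfies the bound
with exponent `θ = m / s` for every `i ≤ m`, and the Leibniz rule closes. The Hölder seminorm of
`∇^m (F G)` also needs Hölder bounds on the lower derivatives; these come from interpolating
between boundedness and the Lipschitz bound that convexity of `Ω` provides. -/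

section Rpow

lemma rpow_mul_rpow_add_rpow_mul_rpow_le {p q : ℝ} (hp : 0 ≤ p) (hq : 0 ≤ q) (hpq : p + q = 1)
    (a b c d : ℝ≥0∞) :
    a ^ p * c ^ q + b ^ p * d ^ q ≤ (a + b) ^ p * (c + d) ^ q := by
  have hölder := ENNReal.lintegral_mul_norm_pow_le (μ := MeasureTheory.Measure.count)
    (measurable_of_finite (Bool.rec b a)).aemeasurable
    (measurable_of_finite (Bool.rec d c)).aemeasurable hp hq hpq
  simpa only [MeasureTheory.lintegral_count, tsum_bool, add_comm] using hölder

lemma rpow_mul_rpow_one_sub_le_of_le {p q : ℝ} (hp : 0 ≤ p) (hpq : p ≤ q) (hq : q ≤ 1)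
    {a b : ℝ≥0∞} (hba : b ≤ a) : a ^ p * b ^ (1 - p) ≤ a ^ q * b ^ (1 - q) := by
  have hqp : 0 ≤ q - p := sub_nonneg.2 hpq
  calc a ^ p * b ^ (1 - p)
      = a ^ p * (b ^ (q - p) * b ^ (1 - q)) := by
        rw [← ENNReal.rpow_add_of_nonneg _ _ hqp (sub_nonneg.2 hq), sub_add_sub_cancel']
    _ ≤ a ^ p * (a ^ (q - p) * b ^ (1 - q)) := by gcongr
    _ = a ^ q * b ^ (1 - q) := by
        rw [← mul_assoc, ← ENNReal.rpow_add_of_nonneg _ _ hp hqp, add_sub_cancel]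

lemma div_rpow_sub_rpow_inv_le_iff {r s : ℝ} (hr : 0 < r) (hrs : r ≤ s) {a b c : ℝ≥0∞}
    (hb : b ≠ ∞) (hc : c ≠ ∞) :
    (a ^ s / b ^ (s - r)) ^ (1 / r) ≤ c ↔ a ≤ c ^ (r / s) * b ^ (1 - r / s) := by
  have hs : 0 < s := hr.trans_le hrs
  have hb_exp : (s - r) * s⁻¹ = 1 - r / s := by field_simp
  calc (a ^ s / b ^ (s - r)) ^ (1 / r) ≤ c
      ↔ a ^ s ≤ c ^ r * b ^ (s - r) := by
        rw [one_div, ENNReal.rpow_inv_le_iff hr, ENNReal.div_le_iff_le_mul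
          (Or.inr (ENNReal.rpow_ne_top_of_nonneg hr.le hc))
          (Or.inl (ENNReal.rpow_ne_top_of_nonneg (sub_nonneg.2 hrs) hb))]
    _ ↔ a ≤ c ^ (r / s) * b ^ (1 - r / s) := by
        rw [← ENNReal.le_rpow_inv_iff hs, ENNReal.mul_rpow_of_nonneg _ _ (inv_nonneg.2 hs.le),
          ← ENNReal.rpow_mul, ← ENNReal.rpow_mul, hb_exp, div_eq_mul_inv]

lemma mul_rpow_div_mul_rpow_sub_rpow_inv {r s : ℝ} (hr : 0 < r) (hrs : r ≤ s) {c : ℝ≥0∞}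
    (hc : c ≠ ∞) (a b : ℝ≥0∞) :
    ((c * a) ^ s / (c * b) ^ (s - r)) ^ (1 / r) = c * (a ^ s / b ^ (s - r)) ^ (1 / r) := by
  have hs : 0 < s := hr.trans_le hrs
  have hsr : 0 ≤ s - r := sub_nonneg.2 hrs
  rcases eq_or_ne c 0 with rfl | hc0
  · simp [ENNReal.zero_rpow_of_pos, hs, hr]
  have hquot : c ^ s / c ^ (s - r) = c ^ r := by
    rw [← ENNReal.rpow_sub _ _ hc0 hc, _root_.sub_sub_cancel]
  rw [ENNReal.mul_rpow_of_nonneg _ _ hs.le, ENNReal.mul_rpow_of_nonneg _ _ hsr,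
    ENNReal.mul_div_mul_comm (Or.inl (ENNReal.rpow_pos (pos_iff_ne_zero.2 hc0) hc).ne')
      (Or.inl (ENNReal.rpow_ne_top_of_nonneg hsr hc)), hquot,
    ENNReal.mul_rpow_of_nonneg _ _ (one_div_nonneg.2 hr.le), ← ENNReal.rpow_mul,
    mul_one_div_cancel hr.ne', ENNReal.rpow_one]

end Rpow

section IteratedFDeriv

variable {𝕜 X W : Type*} [NontriviallyNormedField 𝕜] [NormedAddCommGroup X] [NormedSpace 𝕜 X]
  [NormedAddCommGroup W] [NormedSpace 𝕜 W] {f g : X → W} {U : Set X} {m : ℕ} {x : X}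

lemma enorm_iteratedFDerivWithin_add_le (hU : UniqueDiffOn 𝕜 U)
    (hf : ContDiffWithinAt 𝕜 m f U x) (hg : ContDiffWithinAt 𝕜 m g U x) (hx : x ∈ U) :
    ‖iteratedFDerivWithin 𝕜 m (f + g) U x‖ₑ ≤
      ‖iteratedFDerivWithin 𝕜 m f U x‖ₑ + ‖iteratedFDerivWithin 𝕜 m g U x‖ₑ := by
  simpa only [iteratedFDerivWithin_add_apply hf hg hU hx, enorm_eq_nnnorm, ← ENNReal.coe_add,
    ENNReal.coe_le_coe] using nnnorm_add_le _ _

lemma enorm_iteratedFDeriv_add_le (hf : ContDiffAt 𝕜 m f x) (hg : ContDiffAt 𝕜 m g x) :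
    ‖iteratedFDeriv 𝕜 m (f + g) x‖ₑ ≤ ‖iteratedFDeriv 𝕜 m f x‖ₑ + ‖iteratedFDeriv 𝕜 m g x‖ₑ := by
  simpa only [iteratedFDerivWithin_univ] using
    enorm_iteratedFDerivWithin_add_le uniqueDiffOn_univ hf hg (mem_univ x)

lemma contDiffAt_comp_add_right {n : WithTop ℕ∞} {v : X} (hf : ContDiffAt 𝕜 n f (x + v)) :
    ContDiffAt 𝕜 n (fun z => f (z + v)) x :=
  hf.comp x (contDiffAt_id.add contDiffAt_const)

lemma iteratedFDeriv_comp_add_right_sub {v : X} (hfv : ContDiffAt 𝕜 m f (x + v))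
    (hf : ContDiffAt 𝕜 m f x) :
    iteratedFDeriv 𝕜 m (fun z => f (z + v) - f z) x =
      iteratedFDeriv 𝕜 m f (x + v) - iteratedFDeriv 𝕜 m f x := by
  rw [← iteratedFDeriv_comp_add_right]
  exact iteratedFDeriv_sub_apply (contDiffAt_comp_add_right hfv) hf

end IteratedFDeriv

section Leibniz

variable {𝕜 X A : Type*} [NontriviallyNormedField 𝕜] [NormedAddCommGroup X] [NormedSpace 𝕜 X]
  [NormedRing A] [NormedAlgebra 𝕜 A] {f g : X → A} {U : Set X} {m : ℕ} {x y : X} {K : ℝ≥0∞}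

lemma enorm_iteratedFDerivWithin_mul_le (hU : UniqueDiffOn 𝕜 U) (hf : ContDiffOn 𝕜 m f U)
    (hg : ContDiffOn 𝕜 m g U) (hx : x ∈ U)
    (hK : ∀ i j, i + j = m →
      ‖iteratedFDerivWithin 𝕜 i f U x‖ₑ * ‖iteratedFDerivWithin 𝕜 j g U x‖ₑ ≤ K) :
    ‖iteratedFDerivWithin 𝕜 m (f * g) U x‖ₑ ≤ 2 ^ m * K := by
  have leibniz := ENNReal.ofReal_le_ofReal (norm_iteratedFDerivWithin_mul_le hf hg hU hx le_rfl)
  rw [ofReal_norm, ENNReal.ofReal_sum_of_nonneg fun i _ => by positivity] at leibniz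
  calc ‖iteratedFDerivWithin 𝕜 m (f * g) U x‖ₑ
      ≤ ∑ i ∈ Finset.range (m + 1), (m.choose i : ℝ≥0∞) * K := by
        refine leibniz.trans (Finset.sum_le_sum fun i hi => ?_)
        rw [mul_assoc, ENNReal.ofReal_mul (by positivity), ENNReal.ofReal_mul (by positivity),
          ofReal_norm, ofReal_norm, ENNReal.ofReal_natCast]
        gcongr
        exact hK i (m - i) (Nat.add_sub_of_le (Finset.mem_range_succ_iff.1 hi))
    _ = 2 ^ m * K := by
        rw [← Finset.sum_mul]
        exact_mod_cast congrArg (fun N : ℕ => (N : ℝ≥0∞) * K) (Nat.sum_range_choose m)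

lemma enorm_iteratedFDeriv_mul_le (hf : ContDiffAt 𝕜 m f x) (hg : ContDiffAt 𝕜 m g x)
    (hK : ∀ i j, i + j = m → ‖iteratedFDeriv 𝕜 i f x‖ₑ * ‖iteratedFDeriv 𝕜 j g x‖ₑ ≤ K) :
    ‖iteratedFDeriv 𝕜 m (f * g) x‖ₑ ≤ 2 ^ m * K := by
  obtain ⟨U, hU, hxU, hfg⟩ := (hf.prodMk hg).contDiffWithinAt.contDiffOn' le_rfl (by simp)
  rw [insert_eq_of_mem (mem_univ x), univ_inter] at hfg
  have hwithin (i : ℕ) (u : X → A) : iteratedFDerivWithin 𝕜 i u U x = iteratedFDeriv 𝕜 i u x :=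
    iteratedFDerivWithin_of_isOpen i hU hxU
  rw [← hwithin]
  exact enorm_iteratedFDerivWithin_mul_le hU.uniqueDiffOn hfg.fst hfg.snd hxU
    fun i j hij => by simpa only [hwithin] using hK i j hij

/- A translation moves the increment to a single point, where the Leibniz bound applies to both
terms of `f(· + v) g(· + v) - f g = (f(· + v) - f) g(· + v) + f (g(· + v) - g)`. -/
lemma enorm_iteratedFDeriv_mul_sub_le (hfx : ContDiffAt 𝕜 m f x) (hfy : ContDiffAt 𝕜 m f y)
    (hgx : ContDiffAt 𝕜 m g x) (hgy : ContDiffAt 𝕜 m g y)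
    (hKf : ∀ i j, i + j = m →
      ‖iteratedFDeriv 𝕜 i f x - iteratedFDeriv 𝕜 i f y‖ₑ * ‖iteratedFDeriv 𝕜 j g x‖ₑ ≤ K)
    (hKg : ∀ i j, i + j = m →
      ‖iteratedFDeriv 𝕜 i f y‖ₑ * ‖iteratedFDeriv 𝕜 j g x - iteratedFDeriv 𝕜 j g y‖ₑ ≤ K) :
    ‖iteratedFDeriv 𝕜 m (f * g) x - iteratedFDeriv 𝕜 m (f * g) y‖ₑ ≤ 2 ^ m * K + 2 ^ m * K := by
  obtain ⟨v, rfl⟩ : ∃ v, y + v = x := ⟨x - y, add_sub_cancel y x⟩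
  have hfv := contDiffAt_comp_add_right hfx
  have hgv := contDiffAt_comp_add_right hgx
  have hsplit : (fun z => (f * g) (z + v) - (f * g) z) =
      (fun z => f (z + v) - f z) * (fun z => g (z + v)) + f * (fun z => g (z + v) - g z) := by
    ext z
    simp only [Pi.mul_apply, Pi.add_apply, sub_mul, mul_sub, sub_add_sub_cancel]
  have hle {i : ℕ} (hi : i ≤ m) : (i : WithTop ℕ∞) ≤ m := by exact_mod_cast hi
  rw [← iteratedFDeriv_comp_add_right_sub (f := f * g) (hfx.mul hgx) (hfy.mul hgy), hsplit]
  refine (enorm_iteratedFDeriv_add_le ((hfv.sub hfy).mul hgv) (hfy.mul (hgv.sub hgy))).trans <|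
    add_le_add (enorm_iteratedFDeriv_mul_le (hfv.sub hfy) hgv fun i j hij => ?_)
      (enorm_iteratedFDeriv_mul_le hfy (hgv.sub hgy) fun i j hij => ?_)
  · have hi := hle (hij ▸ Nat.le_add_right i j)
    rw [iteratedFDeriv_comp_add_right_sub (hfx.of_le hi) (hfy.of_le hi),
      iteratedFDeriv_comp_add_right]
    exact hKf i j hij
  · have hj := hle (hij ▸ Nat.le_add_left j i)
    rw [iteratedFDeriv_comp_add_right_sub (hgx.of_le hj) (hgy.of_le hj)]
    exact hKg i j hij

lemma edist_iteratedFDerivWithin_mul_le (hU : IsOpen U) (hf : ContDiffOn 𝕜 m f U)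
    (hg : ContDiffOn 𝕜 m g U) (hx : x ∈ U) (hy : y ∈ U)
    (hKf : ∀ i j, i + j = m →
      edist (iteratedFDerivWithin 𝕜 i f U x) (iteratedFDerivWithin 𝕜 i f U y) *
        ‖iteratedFDerivWithin 𝕜 j g U x‖ₑ ≤ K)
    (hKg : ∀ i j, i + j = m → ‖iteratedFDerivWithin 𝕜 i f U y‖ₑ *
      edist (iteratedFDerivWithin 𝕜 j g U x) (iteratedFDerivWithin 𝕜 j g U y) ≤ K) :
    edist (iteratedFDerivWithin 𝕜 m (f * g) U x) (iteratedFDerivWithin 𝕜 m (f * g) U y) ≤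
      2 ^ m * K + 2 ^ m * K := by
  have hwithin {z : X} (hz : z ∈ U) (i : ℕ) (u : X → A) :
      iteratedFDerivWithin 𝕜 i u U z = iteratedFDeriv 𝕜 i u z :=
    iteratedFDerivWithin_of_isOpen i hU hz
  simp only [edist_eq_enorm_sub, hwithin hx, hwithin hy] at hKf hKg ⊢
  exact enorm_iteratedFDeriv_mul_sub_le (hf.contDiffAt (hU.mem_nhds hx))
    (hf.contDiffAt (hU.mem_nhds hy)) (hg.contDiffAt (hU.mem_nhds hx))
    (hg.contDiffAt (hU.mem_nhds hy)) hKf hKg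

end Leibniz

lemma holderOnWith_of_nnnorm_fderivWithin_le {V W : Type*} [NormedAddCommGroup V]
    [NormedSpace ℝ V] [NormedAddCommGroup W] [NormedSpace ℝ W] {Ω : Set V} (hconv : Convex ℝ Ω)
    {f : V → W} (hf : DifferentiableOn ℝ f Ω) {C α : ℝ≥0} (hα : α ≤ 1)
    (hC : ∀ x ∈ Ω, ‖f x‖₊ ≤ C) (hC' : ∀ x ∈ Ω, ‖fderivWithin ℝ f Ω x‖₊ ≤ C) :
    HolderOnWith (2 * C) α f Ω := by
  have hlip : HolderOnWith C 1 f Ω :=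
    holderOnWith_one.2 (hconv.lipschitzOnWith_of_nnnorm_fderivWithin_le hf hC')
  have hbdd : HolderOnWith (2 * C) 0 f Ω := fun x hx y hy => by
    have hxy : nndist (f x) (f y) ≤ 2 * C := by
      rw [nndist_eq_nnnorm, two_mul]
      exact (nnnorm_sub_le _ _).trans (add_le_add (hC x hx) (hC y hy))
    rw [NNReal.coe_zero, ENNReal.rpow_zero, mul_one, edist_nndist]
    exact_mod_cast hxy
  exact (hbdd.of_le_of_le hlip zero_le hα).mono_const
    (max_le le_rfl (le_mul_of_one_le_left' one_le_two))

section FlatSpace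

variable {s : ℝ} {Ω : Set E} {F G : E → ℝ} {m : ℕ} {x : E} {A : ℝ≥0∞}

lemma natCast_lt_of_le_lowFloor (hs : 0 < s) (hm : m ≤ lowFloor s) : (m : ℝ) < s := by
  have hceil : 0 < ⌈s⌉₊ := Nat.ceil_pos.2 hs
  exact Nat.lt_ceil.1 (by unfold lowFloor at hm; omega)

lemma natCast_div_lt_one_of_le_lowFloor (hs : 0 < s) (hm : m ≤ lowFloor s) : (m : ℝ) / s < 1 :=
  (div_lt_one hs).2 (natCast_lt_of_le_lowFloor hs hm)

lemma sub_lowFloor_le_one (s : ℝ) : s - lowFloor s ≤ 1 := by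
  have hceil : ⌈s⌉₊ ≤ 1 + lowFloor s := by unfold lowFloor; omega
  exact sub_le_iff_le_add.2 ((Nat.le_ceil s).trans (by exact_mod_cast hceil))

lemma contDiffOn_of_le_lowFloor (hF : ContDiffOn ℝ (lowFloor s) F Ω) (hm : m ≤ lowFloor s) :
    ContDiffOn ℝ m F Ω :=
  hF.of_le (by exact_mod_cast hm)

lemma derivSup_le_iff :
    derivSup s Ω F ≤ A ↔
      ∀ m ≤ lowFloor s, ∀ x ∈ Ω, ‖iteratedFDerivWithin ℝ m F Ω x‖ₑ ≤ A := by
  simp only [derivSup, iSup_le_iff, enorm_eq_nnnorm]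

lemma enorm_iteratedFDerivWithin_le_derivSup (hm : m ≤ lowFloor s) (hx : x ∈ Ω) :
    ‖iteratedFDerivWithin ℝ m F Ω x‖ₑ ≤ derivSup s Ω F :=
  derivSup_le_iff.1 le_rfl m hm x hx

lemma enorm_iteratedFDerivWithin_le_csNorm (hm : m ≤ lowFloor s) (hx : x ∈ Ω) :
    ‖iteratedFDerivWithin ℝ m F Ω x‖ₑ ≤ csNorm s Ω F :=
  (enorm_iteratedFDerivWithin_le_derivSup hm hx).trans le_self_add

lemma holderSemi_le_iff (hs : 0 < s) :
    holderSemi s Ω F ≤ A ↔ ∀ x ∈ Ω, ∀ y ∈ Ω,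
      edist (iteratedFDerivWithin ℝ (lowFloor s) F Ω x)
        (iteratedFDerivWithin ℝ (lowFloor s) F Ω y) ≤ A * edist x y ^ (s - lowFloor s) := by
  simp only [holderSemi, iSup_le_iff, ← enorm_eq_nnnorm, ← edist_eq_enorm_sub]
  refine forall₂_congr fun x _ => forall₂_congr fun y _ => ?_
  rcases eq_or_ne x y with rfl | hxy
  · simp
  have hexp : 0 < s - lowFloor s := sub_pos.2 (natCast_lt_of_le_lowFloor hs le_rfl)
  rw [← ENNReal.ofReal_rpow_of_nonneg (norm_nonneg _) hexp.le, ofReal_norm, ← edist_eq_enorm_sub,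
    ENNReal.div_le_iff (ENNReal.rpow_pos (edist_pos.2 hxy) (edist_ne_top x y)).ne'
      (ENNReal.rpow_ne_top_of_nonneg hexp.le (edist_ne_top x y))]
  exact forall_prop_of_true hxy

lemma flatSemi_le_iff (hs : 0 < s) (hA : A ≠ ∞) :
    flatSemi s Ω F ≤ A ↔ ∀ m, 1 ≤ m → m ≤ lowFloor s → ∀ x ∈ Ω,
      ‖iteratedFDerivWithin ℝ m F Ω x‖ₑ ≤
        A ^ ((m : ℝ) / s) * ENNReal.ofReal (F x) ^ (1 - (m : ℝ) / s) := by
  simp only [flatSemi, iSup_le_iff, ← enorm_eq_nnnorm]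
  exact forall₃_congr fun m hm hms => forall₂_congr fun x _ =>
    div_rpow_sub_rpow_inv_le_iff (by exact_mod_cast hm) (natCast_lt_of_le_lowFloor hs hms).le
      ENNReal.ofReal_ne_top hA

lemma csNorm_add_le (hs : 0 < s) (hΩ : UniqueDiffOn ℝ Ω) (hF : ContDiffOn ℝ (lowFloor s) F Ω)
    (hG : ContDiffOn ℝ (lowFloor s) G Ω) :
    csNorm s Ω (F + G) ≤ csNorm s Ω F + csNorm s Ω G := by
  have hderiv : derivSup s Ω (F + G) ≤ derivSup s Ω F + derivSup s Ω G :=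
    derivSup_le_iff.2 fun m hm x hx => by
      grw [enorm_iteratedFDerivWithin_add_le hΩ (contDiffOn_of_le_lowFloor hF hm x hx)
        (contDiffOn_of_le_lowFloor hG hm x hx) hx, enorm_iteratedFDerivWithin_le_derivSup hm hx,
        enorm_iteratedFDerivWithin_le_derivSup hm hx]
  have hholder : holderSemi s Ω (F + G) ≤ holderSemi s Ω F + holderSemi s Ω G :=
    (holderSemi_le_iff hs).2 fun x hx y hy => by
      rw [iteratedFDerivWithin_add_apply (hF x hx) (hG x hx) hΩ hx,
        iteratedFDerivWithin_add_apply (hF y hy) (hG y hy) hΩ hy, add_mul]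
      exact (edist_add_add_le _ _ _ _).trans (add_le_add
        ((holderSemi_le_iff hs).1 le_rfl x hx y hy) ((holderSemi_le_iff hs).1 le_rfl x hx y hy))
  exact (add_le_add hderiv hholder).trans_eq (add_add_add_comm _ _ _ _)

lemma flatSemi_add_le (hs : 0 < s) (hΩ : UniqueDiffOn ℝ Ω) (hF : ContDiffOn ℝ (lowFloor s) F Ω)
    (hG : ContDiffOn ℝ (lowFloor s) G Ω) (hF0 : ∀ x ∈ Ω, 0 ≤ F x) (hG0 : ∀ x ∈ Ω, 0 ≤ G x) :
    flatSemi s Ω (F + G) ≤ flatSemi s Ω F + flatSemi s Ω G := by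
  rcases eq_or_ne (flatSemi s Ω F + flatSemi s Ω G) ∞ with htop | hfin
  · exact htop ▸ le_top
  obtain ⟨hFfin, hGfin⟩ := ENNReal.add_ne_top.1 hfin
  refine (flatSemi_le_iff hs hfin).2 fun m hm hms x hx => ?_
  rw [Pi.add_apply, ENNReal.ofReal_add (hF0 x hx) (hG0 x hx)]
  grw [enorm_iteratedFDerivWithin_add_le hΩ (contDiffOn_of_le_lowFloor hF hms x hx)
    (contDiffOn_of_le_lowFloor hG hms x hx) hx, (flatSemi_le_iff hs hFfin).1 le_rfl m hm hms x hx,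
    (flatSemi_le_iff hs hGfin).1 le_rfl m hm hms x hx]
  exact rpow_mul_rpow_add_rpow_mul_rpow_le (by positivity)
    (sub_nonneg.2 (natCast_div_lt_one_of_le_lowFloor hs hms).le) (add_sub_cancel _ _) _ _ _ _

lemma MemFs.add (hs : 0 < s) (hΩ : UniqueDiffOn ℝ Ω) (hF : MemFs s Ω F) (hG : MemFs s Ω G) :
    MemFs s Ω (F + G) := by
  obtain ⟨⟨hFdiff, hFcs⟩, hF0, hFflat⟩ := hF
  obtain ⟨⟨hGdiff, hGcs⟩, hG0, hGflat⟩ := hG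
  exact ⟨⟨hFdiff.add hGdiff, ne_top_of_le_ne_top (ENNReal.add_ne_top.2 ⟨hFcs, hGcs⟩)
    (csNorm_add_le hs hΩ hFdiff hGdiff)⟩, fun x hx => add_nonneg (hF0 x hx) (hG0 x hx),
    ne_top_of_le_ne_top (ENNReal.add_ne_top.2 ⟨hFflat, hGflat⟩)
      (flatSemi_add_le hs hΩ hFdiff hGdiff hF0 hG0)⟩

lemma csNorm_const_smul_le (hs : 0 < s) (hΩ : UniqueDiffOn ℝ Ω)
    (hF : ContDiffOn ℝ (lowFloor s) F Ω) (c : ℝ) :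
    csNorm s Ω (c • F) ≤ ‖c‖ₑ * csNorm s Ω F := by
  have hsmul {m : ℕ} (hm : m ≤ lowFloor s) {x : E} (hx : x ∈ Ω) :=
    iteratedFDerivWithin_const_smul_apply (a := c) (contDiffOn_of_le_lowFloor hF hm x hx) hΩ hx
  rw [csNorm, csNorm, mul_add]
  refine add_le_add (derivSup_le_iff.2 fun m hm x hx => ?_)
    ((holderSemi_le_iff hs).2 fun x hx y hy => ?_)
  · rw [hsmul hm hx, enorm_smul]
    gcongr
    exact enorm_iteratedFDerivWithin_le_derivSup hm hx
  · rw [hsmul le_rfl hx, hsmul le_rfl hy, edist_eq_enorm_sub, ← smul_sub, enorm_smul,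
      ← edist_eq_enorm_sub, mul_assoc]
    exact mul_le_mul_right ((holderSemi_le_iff hs).1 le_rfl x hx y hy) _

lemma flatSemi_const_smul (hs : 0 < s) (hΩ : UniqueDiffOn ℝ Ω)
    (hF : ContDiffOn ℝ (lowFloor s) F Ω) {c : ℝ} (hc : 0 ≤ c) :
    flatSemi s Ω (c • F) = ENNReal.ofReal c * flatSemi s Ω F := by
  simp only [flatSemi, ENNReal.mul_iSup, ← enorm_eq_nnnorm]
  refine iSup_congr fun m => iSup_congr fun hm => iSup_congr fun hms => iSup_congr fun x =>
    iSup_congr fun hx => ?_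
  rw [iteratedFDerivWithin_const_smul_apply (contDiffOn_of_le_lowFloor hF hms x hx) hΩ hx,
    Pi.smul_apply, smul_eq_mul, ENNReal.ofReal_mul hc, enorm_smul, Real.enorm_eq_ofReal hc]
  exact mul_rpow_div_mul_rpow_sub_rpow_inv (by exact_mod_cast hm)
    (natCast_lt_of_le_lowFloor hs hms).le ENNReal.ofReal_ne_top _ _

lemma MemFs.const_smul (hs : 0 < s) (hΩ : UniqueDiffOn ℝ Ω) (hF : MemFs s Ω F) {c : ℝ}
    (hc : 0 ≤ c) : MemFs s Ω (c • F) := by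
  obtain ⟨⟨hdiff, hcs⟩, hF0, hflat⟩ := hF
  exact ⟨⟨hdiff.const_smul c, ne_top_of_le_ne_top (ENNReal.mul_ne_top enorm_ne_top hcs)
    (csNorm_const_smul_le hs hΩ hdiff c)⟩, fun x hx => mul_nonneg hc (hF0 x hx),
    flatSemi_const_smul hs hΩ hdiff hc ▸ ENNReal.mul_ne_top ENNReal.ofReal_ne_top hflat⟩

lemma MemCs.edist_iteratedFDerivWithin_le (hs : 0 < s) (hconv : Convex ℝ Ω)
    (hΩ : UniqueDiffOn ℝ Ω) (hF : MemCs s Ω F) (hm : m ≤ lowFloor s) {y : E} (hx : x ∈ Ω)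
    (hy : y ∈ Ω) :
    edist (iteratedFDerivWithin ℝ m F Ω x) (iteratedFDerivWithin ℝ m F Ω y) ≤
      2 * csNorm s Ω F * edist x y ^ (s - lowFloor s) := by
  rcases hm.eq_or_lt with rfl | hm
  · refine ((holderSemi_le_iff hs).1 le_rfl x hx y hy).trans ?_
    gcongr
    exact le_add_self.trans (le_mul_of_one_le_left' one_le_two)
  have hexp : 0 ≤ s - lowFloor s := (sub_pos.2 (natCast_lt_of_le_lowFloor hs le_rfl)).le
  obtain ⟨C, hC⟩ : ∃ C : ℝ≥0, (C : ℝ≥0∞) = csNorm s Ω F := ⟨_, ENNReal.coe_toNNReal hF.2⟩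
  have hbound {i : ℕ} (hi : i ≤ lowFloor s) {z : E} (hz : z ∈ Ω) :
      ‖iteratedFDerivWithin ℝ i F Ω z‖₊ ≤ C := by
    have h := enorm_iteratedFDerivWithin_le_csNorm (F := F) hi hz
    rwa [← hC, enorm_eq_nnnorm, ENNReal.coe_le_coe] at h
  have hdiff := hF.1.differentiableOn_iteratedFDerivWithin (m := m) (by exact_mod_cast hm) hΩ
  have hholder := holderOnWith_of_nnnorm_fderivWithin_le hconv hdiff
    (Real.toNNReal_le_one.2 (sub_lowFloor_le_one s)) (fun z hz => hbound hm.le hz)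
    fun z hz => NNReal.coe_le_coe.1 <| by
      simpa only [coe_nnnorm, norm_fderivWithin_iteratedFDerivWithin] using
        NNReal.coe_le_coe.2 (hbound hm hz)
  simpa only [← hC, ENNReal.coe_mul, ENNReal.coe_ofNat, Real.coe_toNNReal _ hexp] using
    hholder x hx y hy

lemma csNorm_mul_le (hs : 0 < s) (hconv : Convex ℝ Ω) (hΩ : IsOpen Ω) (hF : MemCs s Ω F)
    (hG : MemCs s Ω G) :
    csNorm s Ω (F * G) ≤ 5 * 2 ^ lowFloor s * (csNorm s Ω F * csNorm s Ω G) := by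
  have hderiv : derivSup s Ω (F * G) ≤ 2 ^ lowFloor s * (csNorm s Ω F * csNorm s Ω G) :=
    derivSup_le_iff.2 fun m hm x hx =>
      (enorm_iteratedFDerivWithin_mul_le hΩ.uniqueDiffOn (contDiffOn_of_le_lowFloor hF.1 hm)
        (contDiffOn_of_le_lowFloor hG.1 hm) hx fun i j hij =>
          mul_le_mul' (enorm_iteratedFDerivWithin_le_csNorm (s := s) (by omega) hx)
            (enorm_iteratedFDerivWithin_le_csNorm (s := s) (by omega) hx)).trans <| by
      gcongr
      exact one_le_two
  have hholder : holderSemi s Ω (F * G) ≤ 4 * 2 ^ lowFloor s * (csNorm s Ω F * csNorm s Ω G) := by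
    refine (holderSemi_le_iff hs).2 fun x hx y hy => ?_
    refine (edist_iteratedFDerivWithin_mul_le hΩ hF.1 hG.1 hx hy
      (K := 2 * (csNorm s Ω F * csNorm s Ω G) * edist x y ^ (s - lowFloor s))
      (fun i j hij => ?_) (fun i j hij => ?_)).trans_eq (by ring)
    · exact (mul_le_mul' (hF.edist_iteratedFDerivWithin_le hs hconv hΩ.uniqueDiffOn
        (by omega) hx hy)
        (enorm_iteratedFDerivWithin_le_csNorm (s := s) (by omega) hx)).trans_eq (by ring)
    · exact (mul_le_mul' (enorm_iteratedFDerivWithin_le_csNorm (s := s) (by omega) hy)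
        (hG.edist_iteratedFDerivWithin_le hs hconv hΩ.uniqueDiffOn
          (by omega) hx hy)).trans_eq (by ring)
  exact (add_le_add hderiv hholder).trans_eq (by ring)

lemma MemFs.fsNorm_ne_top (hF : MemFs s Ω F) : fsNorm s Ω F ≠ ∞ :=
  ENNReal.add_ne_top.2 ⟨hF.1.2, hF.2.2⟩

lemma ofReal_le_fsNorm (hx : x ∈ Ω) : ENNReal.ofReal (F x) ≤ fsNorm s Ω F :=
  calc ENNReal.ofReal (F x)
      ≤ ‖iteratedFDerivWithin ℝ 0 F Ω x‖ₑ := by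
        rw [← ofReal_norm, norm_iteratedFDerivWithin_zero]
        exact ENNReal.ofReal_le_ofReal (le_abs_self _)
    _ ≤ fsNorm s Ω F :=
        (enorm_iteratedFDerivWithin_le_csNorm (Nat.zero_le _) hx).trans le_self_add

lemma MemFs.enorm_iteratedFDerivWithin_le (hs : 0 < s) (hF : MemFs s Ω F) (hm : m ≤ lowFloor s)
    (hx : x ∈ Ω) :
    ‖iteratedFDerivWithin ℝ m F Ω x‖ₑ ≤
      fsNorm s Ω F ^ ((m : ℝ) / s) * ENNReal.ofReal (F x) ^ (1 - (m : ℝ) / s) := by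
  rcases Nat.eq_zero_or_pos m with rfl | hm0
  · rw [← ofReal_norm, norm_iteratedFDerivWithin_zero, Real.norm_of_nonneg (hF.2.1 x hx)]
    simp
  · exact (flatSemi_le_iff hs hF.fsNorm_ne_top).1 le_add_self m hm0 hm x hx

lemma MemFs.enorm_iteratedFDerivWithin_le_of_le (hs : 0 < s) (hF : MemFs s Ω F) {i : ℕ}
    (hi : i ≤ m) (hm : m ≤ lowFloor s) (hx : x ∈ Ω) :
    ‖iteratedFDerivWithin ℝ i F Ω x‖ₑ ≤
      fsNorm s Ω F ^ ((m : ℝ) / s) * ENNReal.ofReal (F x) ^ (1 - (m : ℝ) / s) :=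
  (hF.enorm_iteratedFDerivWithin_le hs (hi.trans hm) hx).trans <|
    rpow_mul_rpow_one_sub_le_of_le (by positivity) (by gcongr)
      (natCast_div_lt_one_of_le_lowFloor hs hm).le (ofReal_le_fsNorm hx)

lemma flatSemi_mul_le (hs : 0 < s) (hΩ : UniqueDiffOn ℝ Ω) (hF : MemFs s Ω F)
    (hG : MemFs s Ω G) :
    flatSemi s Ω (F * G) ≤ 2 ^ s * (fsNorm s Ω F * fsNorm s Ω G) := by
  have hfin : 2 ^ s * (fsNorm s Ω F * fsNorm s Ω G) ≠ ∞ :=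
    ENNReal.mul_ne_top (ENNReal.rpow_ne_top_of_nonneg hs.le ENNReal.ofNat_ne_top)
      (ENNReal.mul_ne_top hF.fsNorm_ne_top hG.fsNorm_ne_top)
  refine (flatSemi_le_iff hs hfin).2 fun m _ hm x hx => ?_
  have hexp : 0 ≤ 1 - (m : ℝ) / s := sub_nonneg.2 (natCast_div_lt_one_of_le_lowFloor hs hm).le
  have hexp' : 0 ≤ (m : ℝ) / s := by positivity
  refine (enorm_iteratedFDerivWithin_mul_le hΩ (contDiffOn_of_le_lowFloor hF.1.1 hm)
    (contDiffOn_of_le_lowFloor hG.1.1 hm) hx fun i j hij =>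
      mul_le_mul' (hF.enorm_iteratedFDerivWithin_le_of_le hs (by omega) hm hx)
        (hG.enorm_iteratedFDerivWithin_le_of_le hs (by omega) hm hx)).trans_eq ?_
  have htwo : ((2 : ℝ≥0∞) ^ s) ^ ((m : ℝ) / s) = 2 ^ m := by
    rw [← ENNReal.rpow_mul, mul_div_cancel₀ _ hs.ne', ENNReal.rpow_natCast]
  rw [Pi.mul_apply, ENNReal.ofReal_mul (hF.2.1 x hx), ENNReal.mul_rpow_of_nonneg _ _ hexp,
    ENNReal.mul_rpow_of_nonneg _ _ hexp', ENNReal.mul_rpow_of_nonneg _ _ hexp', htwo]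
  ring

lemma fsNorm_mul_le (hs : 0 < s) (hconv : Convex ℝ Ω) (hΩ : IsOpen Ω) (hF : MemFs s Ω F)
    (hG : MemFs s Ω G) :
    fsNorm s Ω (F * G) ≤ ENNReal.ofReal (6 * 2 ^ s) * fsNorm s Ω F * fsNorm s Ω G := by
  have hpow : (2 : ℝ≥0∞) ^ lowFloor s ≤ 2 ^ s := by
    rw [← ENNReal.rpow_natCast]
    exact ENNReal.rpow_le_rpow_of_exponent_le one_le_two
      (natCast_lt_of_le_lowFloor hs le_rfl).le
  have hconst : ENNReal.ofReal (6 * 2 ^ s) = 6 * 2 ^ s := by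
    rw [ENNReal.ofReal_mul (by norm_num), ← ENNReal.ofReal_rpow_of_pos two_pos]
    simp only [ENNReal.ofReal_ofNat]
  calc fsNorm s Ω (F * G)
      ≤ 5 * 2 ^ lowFloor s * (csNorm s Ω F * csNorm s Ω G) +
          2 ^ s * (fsNorm s Ω F * fsNorm s Ω G) :=
        add_le_add (csNorm_mul_le hs hconv hΩ hF.1 hG.1) (flatSemi_mul_le hs hΩ.uniqueDiffOn hF hG)
    _ ≤ 5 * 2 ^ s * (fsNorm s Ω F * fsNorm s Ω G) + 2 ^ s * (fsNorm s Ω F * fsNorm s Ω G) := by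
        gcongr <;> exact le_self_add
    _ = ENNReal.ofReal (6 * 2 ^ s) * fsNorm s Ω F * fsNorm s Ω G := by rw [hconst]; ring

lemma MemFs.mul (hs : 0 < s) (hconv : Convex ℝ Ω) (hΩ : IsOpen Ω) (hF : MemFs s Ω F)
    (hG : MemFs s Ω G) : MemFs s Ω (F * G) := by
  have hfin : fsNorm s Ω (F * G) ≠ ∞ := ne_top_of_le_ne_top
    (ENNReal.mul_ne_top (ENNReal.mul_ne_top ENNReal.ofReal_ne_top hF.fsNorm_ne_top)
      hG.fsNorm_ne_top) (fsNorm_mul_le hs hconv hΩ hF hG)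
  obtain ⟨hcs, hflat⟩ := ENNReal.add_ne_top.1 hfin
  exact ⟨⟨hF.1.1.mul hG.1.1, hcs⟩, fun x hx => mul_nonneg (hF.2.1 x hx) (hG.2.1 x hx), hflat⟩

theorem statement1_general (hs : 0 < s) (hconv : Convex ℝ Ω) (hΩ : IsOpen Ω)
    (hF : MemFs s Ω F) (hG : MemFs s Ω G) {lam : ℝ} (hlam : 0 ≤ lam) :
    (MemFs s Ω (F + G) ∧ flatSemi s Ω (F + G) ≤ flatSemi s Ω F + flatSemi s Ω G) ∧
    (MemFs s Ω (lam • F) ∧ flatSemi s Ω (lam • F) = ENNReal.ofReal lam * flatSemi s Ω F) ∧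
    (MemFs s Ω (F * G) ∧
      fsNorm s Ω (F * G) ≤ ENNReal.ofReal (6 * 2 ^ s) * fsNorm s Ω F * fsNorm s Ω G) :=
  ⟨⟨hF.add hs hΩ.uniqueDiffOn hG,
      flatSemi_add_le hs hΩ.uniqueDiffOn hF.1.1 hG.1.1 hF.2.1 hG.2.1⟩,
    ⟨hF.const_smul hs hΩ.uniqueDiffOn hlam, flatSemi_const_smul hs hΩ.uniqueDiffOn hF.1.1 hlam⟩,
    ⟨hF.mul hs hconv hΩ hG, fsNorm_mul_le hs hconv hΩ hF hG⟩⟩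

end FlatSpace

/-- Proposition `Fs basic`(A): `F^s(Ω)` is a positive cone:
sums, nonnegative scalar multiples, and (up to a constant `C(n,s)`) products of
`F^s(Ω)` functions remain in `F^s(Ω)`, with the corresponding seminorm
inequalities. -/
theorem statement1 (n : ℕ) (hn : 1 ≤ n) (s : ℝ) (hs : 0 < s) :
    ∃ C : ℝ, 0 < C ∧
      ∀ (Ω : Set (EuclideanSpace ℝ (Fin n))), Convex ℝ Ω → IsOpen Ω →
      ∀ F G : EuclideanSpace ℝ (Fin n) → ℝ, MemFs s Ω F → MemFs s Ω G →
      ∀ lam : ℝ, 0 ≤ lam →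
        (MemFs s Ω (F + G) ∧
          flatSemi s Ω (F + G) ≤ flatSemi s Ω F + flatSemi s Ω G) ∧
        (MemFs s Ω (lam • F) ∧
          flatSemi s Ω (lam • F) = ENNReal.ofReal lam * flatSemi s Ω F) ∧
        (MemFs s Ω (F * G) ∧
          fsNorm s Ω (F * G) ≤
            ENNReal.ofReal C * fsNorm s Ω F * fsNorm s Ω G) := by
  exact ⟨6 * 2 ^ s, by positivity, fun _ hconv hΩ _ _ hF hG _ hlam =>
    statement1_general hs hconv hΩ hF hG hlam⟩

end
end

section
/- Given ε > 0, n ≥ 1, and s > 0, there exists c₀ > 0 depending only on ε, n, s such that for every 0 < c ≤ c₀ the following holds. Let Ω ⊆ ℝⁿ be a convex open set, x₀ ∈ Ω, and F ∈ F^s(Ω) with ‖F‖_{Ċ^s(Ω)} + ‖F‖_{Ḟ^s(Ω)} > 0. Set δ := c (F(x₀) / (‖F‖_{Ċ^s(Ω)} + ‖F‖_{Ḟ^s(Ω)}))^{1/s}. Then for all x ∈ Ω with |x − x₀| < δ and all 0 ≤ m < s, |∇^m F(x) − ∇^m F(x₀)| ≤ ε · (‖F‖_{Ċ^s(Ω)}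 + ‖F‖_{Ḟ^s(Ω)})^{m/s} · F(x₀)^{(s−m)/s}; in particular |F(x) − F(x₀)| ≤ ε F(x₀) for all such x. -/
open Set ENNReal
open scoped NNReal

noncomputable section

variable {E : Type*} [NormedAddCommGroup E] [NormedSpace ℝ E]

/-!
With `K = ‖F‖_{Ċ^s} + ‖F‖_{Ḟ^s}`, the scale `r = (F(x₀)/K)^{1/s}` turns the two seminorm bounds into
dimensionally homogeneous ones: flatness reads `|∇^m F(x₀)| ≤ F(x₀)/r^m`, and Hölder continuity
makes the top derivative oscillate by at most `c^{s-⌊s⌋} F(x₀)/r^{⌊s⌋}` on the ball of radius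
`c r`. Descending from order `m + 1` to `m` by the mean value inequality costs a factor `(1 + ε) c`
relative to the natural size `F(x₀)/r^m`, so one choice of `c` with `(1 + ε) c ≤ ε` serves every
order.
-/

section DerivativeOscillation

variable {𝕜 V W : Type*} [RCLike 𝕜] [NormedAddCommGroup V] [NormedSpace ℝ V] [NormedSpace 𝕜 V]
  [NormedAddCommGroup W] [NormedSpace 𝕜 W] {f : V → W} {Ω : Set V}

theorem norm_iteratedFDerivWithin_sub_le_of_norm_succ_le {m : ℕ} {U : Set V} {C : ℝ}
    (hf : DifferentiableOn 𝕜 (iteratedFDerivWithin 𝕜 m f Ω) Ω) (hUΩ : U ⊆ Ω) (hU : Convex ℝ U)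
    (bound : ∀ z ∈ U, ‖iteratedFDerivWithin 𝕜 (m + 1) f Ω z‖ ≤ C) {x y : V} (hx : x ∈ U)
    (hy : y ∈ U) :
    ‖iteratedFDerivWithin 𝕜 m f Ω y - iteratedFDerivWithin 𝕜 m f Ω x‖ ≤ C * ‖y - x‖ :=
  hU.norm_image_sub_le_of_norm_hasFDerivWithin_le
    (fun z hz => (hf z (hUΩ hz)).hasFDerivWithinAt.mono hUΩ)
    (fun z hz => norm_fderivWithin_iteratedFDerivWithin.trans_le (bound z hz)) hx hy

theorem norm_iteratedFDerivWithin_sub_le_mul_div_pow {k : ℕ} (hΩ : Convex ℝ Ω)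
    (hΩu : UniqueDiffOn 𝕜 Ω) (hf : ContDiffOn 𝕜 k f Ω) {x₀ : V} (hx₀ : x₀ ∈ Ω) {A r ρ ε : ℝ}
    (hr : 0 < r) (hε : 0 ≤ ε) (hρ : (1 + ε) * ρ ≤ ε * r)
    (hcenter : ∀ m, 1 ≤ m → m ≤ k → ‖iteratedFDerivWithin 𝕜 m f Ω x₀‖ ≤ A / r ^ m)
    (htop : ∀ x ∈ Ω ∩ Metric.ball x₀ ρ,
      ‖iteratedFDerivWithin 𝕜 k f Ω x - iteratedFDerivWithin 𝕜 k f Ω x₀‖ ≤ ε * (A / r ^ k))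
    {m : ℕ} (hm : m ≤ k) :
    ∀ x ∈ Ω ∩ Metric.ball x₀ ρ,
      ‖iteratedFDerivWithin 𝕜 m f Ω x - iteratedFDerivWithin 𝕜 m f Ω x₀‖ ≤ ε * (A / r ^ m) := by
  induction hm using Nat.decreasingInduction with
  | self => exact htop
  | of_succ m hm ih =>
    intro x hx
    set B := A / r ^ (m + 1) with hB
    have hcenter_succ : ‖iteratedFDerivWithin 𝕜 (m + 1) f Ω x₀‖ ≤ B := hcenter (m + 1) (by lia) hm
    have hB₀ : 0 ≤ B := (norm_nonneg _).trans hcenter_succ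
    have hbound : ∀ y ∈ Ω ∩ Metric.ball x₀ ρ,
        ‖iteratedFDerivWithin 𝕜 (m + 1) f Ω y‖ ≤ (1 + ε) * B := fun y hy => by
      linarith [ih y hy, norm_le_norm_add_norm_sub' (iteratedFDerivWithin 𝕜 (m + 1) f Ω y)
        (iteratedFDerivWithin 𝕜 (m + 1) f Ω x₀)]
    calc ‖iteratedFDerivWithin 𝕜 m f Ω x - iteratedFDerivWithin 𝕜 m f Ω x₀‖
        ≤ (1 + ε) * B * ‖x - x₀‖ :=
          norm_iteratedFDerivWithin_sub_le_of_norm_succ_le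
            (hf.differentiableOn_iteratedFDerivWithin (mod_cast hm) hΩu) inter_subset_left
            (hΩ.inter (convex_ball x₀ ρ)) hbound
            ⟨hx₀, Metric.mem_ball_self (Metric.pos_of_mem_ball hx.2)⟩ hx
      _ ≤ (1 + ε) * B * ρ := by gcongr; exact (mem_ball_iff_norm.1 hx.2).le
      _ = (1 + ε) * ρ * B := by ring
      _ ≤ ε * r * B := by gcongr
      _ = ε * (A / r ^ m) := by rw [hB, pow_succ]; field_simp

end DerivativeOscillation

section Seminorms

theorem lowFloor_lt {s : ℝ} (hs : 0 < s) : (lowFloor s : ℝ) < s :=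
  Nat.lt_ceil.1 (Nat.sub_one_lt (Nat.ceil_pos.2 hs).ne')

variable {s : ℝ} {Ω : Set E} {F : E → ℝ} {K : ℝ≥0}

theorem holderOnWith_of_holderSemi_le (hs : 0 < s) (hK : holderSemi s Ω F ≤ K) :
    HolderOnWith K (s - lowFloor s).toNNReal (iteratedFDerivWithin ℝ (lowFloor s) F Ω) Ω := by
  have hθ : 0 ≤ s - lowFloor s := sub_nonneg.2 (lowFloor_lt hs).le
  intro x hx y hy
  rcases eq_or_ne x y with rfl | hxy
  · simp only [edist_self, zero_le]
  have hquot := (le_iSup₂_of_le x hx <| le_iSup₂_of_le y hy <|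
    le_iSup_of_le hxy le_rfl : _ ≤ holderSemi s Ω F).trans hK
  rwa [ENNReal.div_le_iff_le_mul (.inr coe_ne_top) (.inl ofReal_ne_top),
    ← ENNReal.ofReal_rpow_of_nonneg (norm_nonneg _) hθ, ofReal_norm, ← edist_eq_enorm_sub,
    ← enorm_eq_nnnorm, ← edist_eq_enorm_sub, ← Real.coe_toNNReal _ hθ] at hquot

theorem norm_iteratedFDerivWithin_le_of_flatSemi_le (hs : 0 < s) (hK : flatSemi s Ω F ≤ K)
    {x : E} (hx : x ∈ Ω) (hFx : 0 ≤ F x) {m : ℕ} (hm : 1 ≤ m) (hms : m ≤ lowFloor s) :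
    ‖iteratedFDerivWithin ℝ m F Ω x‖ ≤ K ^ ((m : ℝ) / s) * F x ^ ((s - m) / s) := by
  have hm₀ : (0 : ℝ) < m := by exact_mod_cast hm
  have hsm : 0 ≤ s - m := sub_nonneg.2 ((Nat.cast_le.2 hms).trans (lowFloor_lt hs).le)
  have hquot := (le_iSup₂_of_le m hm <| le_iSup₂_of_le hms x <|
    le_iSup_of_le hx le_rfl : _ ≤ flatSemi s Ω F).trans hK
  have hpow : ‖iteratedFDerivWithin ℝ m F Ω x‖ ^ s ≤ (K : ℝ) ^ (m : ℝ) * F x ^ (s - m) := by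
    rwa [one_div, ENNReal.rpow_inv_le_iff hm₀, ENNReal.div_le_iff_le_mul
        (.inr (rpow_ne_top_of_nonneg hm₀.le coe_ne_top))
        (.inl (rpow_ne_top_of_nonneg hsm ofReal_ne_top)),
      ENNReal.ofReal_rpow_of_nonneg hFx hsm, ← ofReal_coe_nnreal (p := K),
      ENNReal.ofReal_rpow_of_nonneg K.coe_nonneg hm₀.le, ← ENNReal.ofReal_mul (by positivity),
      ← enorm_eq_nnnorm, ← ofReal_norm, ENNReal.ofReal_rpow_of_nonneg (norm_nonneg _) hs.le,
      ENNReal.ofReal_le_ofReal_iff (by positivity)] at hquot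
  rw [div_eq_mul_inv, div_eq_mul_inv, Real.rpow_mul K.coe_nonneg, Real.rpow_mul hFx,
    ← Real.mul_rpow (by positivity) (by positivity)]
  exact (Real.le_rpow_inv_iff_of_pos (norm_nonneg _) (by positivity) hs).2 hpow

theorem MemFs.holderSemi_add_flatSemi_ne_top (hF : MemFs s Ω F) :
    holderSemi s Ω F + flatSemi s Ω F ≠ ∞ :=
  add_ne_top.2 ⟨(add_ne_top.1 hF.1.2).2, hF.2.2⟩

end Seminorms

section FlatScale

/-- The length scale `(A / K) ^ (1 / s)` attached to a value `A` and an order-`s` seminorm `K`: up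
to constants it is the distance on which a flat function of seminorm `K` stays comparable to its
value `A`. -/
def flatScale (s K A : ℝ) : ℝ := (A / K) ^ (1 / s)

variable {s K A : ℝ}

theorem flatScale_pos (hK : 0 < K) (hA : 0 < A) : 0 < flatScale s K A :=
  Real.rpow_pos_of_pos (div_pos hA hK) _

theorem flatScale_nonneg (hK : 0 ≤ K) (hA : 0 ≤ A) : 0 ≤ flatScale s K A :=
  Real.rpow_nonneg (div_nonneg hA hK) _

theorem flatScale_zero_right (hs : s ≠ 0) : flatScale s K 0 = 0 := by
  rw [flatScale, zero_div, Real.zero_rpow (one_div_ne_zero hs)]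

theorem rpow_mul_rpow_eq_div_flatScale_pow (hs : s ≠ 0) (hK : 0 < K) (hA : 0 < A) (m : ℕ) :
    K ^ ((m : ℝ) / s) * A ^ ((s - m) / s) = A / flatScale s K A ^ m := by
  rw [flatScale, ← Real.rpow_mul_natCast (by positivity), one_div_mul_eq_div,
    Real.div_rpow hA.le hK.le, sub_div, div_self hs, Real.rpow_sub hA, Real.rpow_one]
  field_simp

theorem mul_mul_flatScale_rpow (hs : s ≠ 0) (hK : 0 < K) (hA : 0 < A) {c : ℝ} (hc : 0 ≤ c)
    (k : ℕ) :
    K * (c * flatScale s K A) ^ (s - k) = c ^ (s - k) * (A / flatScale s K A ^ k) := by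
  have hr := flatScale_pos (s := s) hK hA
  have hrs : flatScale s K A ^ s = A / K := by
    rw [flatScale, one_div, Real.rpow_inv_rpow (by positivity) hs]
  rw [Real.mul_rpow hc hr.le, Real.rpow_sub_natCast hr.ne', hrs]
  field_simp

end FlatScale

theorem norm_iteratedFDerivWithin_sub_le_of_lt_flatScale {s ε c : ℝ} (hs : 0 < s) (hε : 0 ≤ ε)
    (hc : 0 ≤ c) (hcε : (1 + ε) * c ≤ ε) (hcsε : c ^ (s - lowFloor s) ≤ ε) {Ω : Set E}
    (hΩ : Convex ℝ Ω) (hΩu : UniqueDiffOn ℝ Ω) {F : E → ℝ}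
    (hF : ContDiffOn ℝ (lowFloor s : ℕ∞) F Ω) {K : ℝ≥0} (hK : 0 < (K : ℝ))
    (hholder : holderSemi s Ω F ≤ K) (hflat : flatSemi s Ω F ≤ K) {x₀ x : E} (hx₀ : x₀ ∈ Ω)
    (hFx₀ : 0 < F x₀) (hx : x ∈ Ω) (hxx₀ : ‖x - x₀‖ < c * flatScale s K (F x₀)) {m : ℕ}
    (hm : m ≤ lowFloor s) :
    ‖iteratedFDerivWithin ℝ m F Ω x - iteratedFDerivWithin ℝ m F Ω x₀‖ ≤
      ε * (F x₀ / flatScale s K (F x₀) ^ m) := by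
  have hr : 0 < flatScale s K (F x₀) := flatScale_pos hK hFx₀
  have hθ : 0 ≤ s - lowFloor s := sub_nonneg.2 (lowFloor_lt hs).le
  have hcenter (j : ℕ) (hj : 1 ≤ j) (hjs : j ≤ lowFloor s) :
      ‖iteratedFDerivWithin ℝ j F Ω x₀‖ ≤ F x₀ / flatScale s K (F x₀) ^ j :=
    (norm_iteratedFDerivWithin_le_of_flatSemi_le hs hflat hx₀ hFx₀.le hj hjs).trans_eq
      (rpow_mul_rpow_eq_div_flatScale_pow hs.ne' hK hFx₀ j)
  have htop (y : E) (hy : y ∈ Ω ∩ Metric.ball x₀ (c * flatScale s K (F x₀))) :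
      ‖iteratedFDerivWithin ℝ (lowFloor s) F Ω y - iteratedFDerivWithin ℝ (lowFloor s) F Ω x₀‖ ≤
        ε * (F x₀ / flatScale s K (F x₀) ^ lowFloor s) := by
    have hhold := (holderOnWith_of_holderSemi_le hs hholder).dist_le_of_le hy.1 hx₀
      (Metric.mem_ball.1 hy.2).le
    rw [dist_eq_norm, Real.coe_toNNReal _ hθ, mul_mul_flatScale_rpow hs.ne' hK hFx₀ hc] at hhold
    exact hhold.trans (by gcongr)
  exact norm_iteratedFDerivWithin_sub_le_mul_div_pow hΩ hΩu hF hx₀ hr hε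
    (by rw [← mul_assoc]; gcongr) hcenter htop hm x ⟨hx, mem_ball_iff_norm.2 hxx₀⟩

theorem exists_pos_mul_le_and_rpow_le {ε θ : ℝ} (hε : 0 < ε) (hθ : 0 < θ) :
    ∃ c > 0, (1 + ε) * c ≤ ε ∧ c ^ θ ≤ ε := by
  refine ⟨min (ε / (1 + ε)) (ε ^ θ⁻¹), by positivity, ?_, ?_⟩
  · exact (le_div_iff₀' (by positivity)).1 (min_le_left _ _)
  · exact (Real.le_rpow_inv_iff_of_pos (by positivity) hε.le hθ).1 (min_le_right _ _)

theorem statement7_general {ε s : ℝ} (hε : 0 < ε) (hs : 0 < s) :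
    ∃ c₀ > 0, ∀ (V : Type*) [NormedAddCommGroup V] [NormedSpace ℝ V] (Ω : Set V), Convex ℝ Ω →
      UniqueDiffOn ℝ Ω → ∀ x₀ ∈ Ω, ∀ F : V → ℝ, ContDiffOn ℝ (lowFloor s : ℕ∞) F Ω → 0 ≤ F x₀ →
      holderSemi s Ω F + flatSemi s Ω F ≠ ∞ → 0 < holderSemi s Ω F + flatSemi s Ω F →
      ∀ x ∈ Ω,
        ‖x - x₀‖ < c₀ * flatScale s (holderSemi s Ω F + flatSemi s Ω F).toReal (F x₀) →
        (∀ m ≤ lowFloor s,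
          ‖iteratedFDerivWithin ℝ m F Ω x - iteratedFDerivWithin ℝ m F Ω x₀‖ ≤
            ε * (holderSemi s Ω F + flatSemi s Ω F).toReal ^ ((m : ℝ) / s)
              * F x₀ ^ ((s - m) / s)) ∧
        |F x - F x₀| ≤ ε * F x₀ := by
  obtain ⟨c₀, hc₀, hc₀ε, hc₀sε⟩ := exists_pos_mul_le_and_rpow_le hε (sub_pos.2 (lowFloor_lt hs))
  refine ⟨c₀, hc₀, fun V _ _ Ω hΩ hΩu x₀ hx₀ F hF hFx₀ hfin hpos x hx hxx₀ => ?_⟩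
  have hholder : holderSemi s Ω F ≤ holderSemi s Ω F + flatSemi s Ω F := le_self_add
  have hflat : flatSemi s Ω F ≤ holderSemi s Ω F + flatSemi s Ω F := le_add_self
  lift holderSemi s Ω F + flatSemi s Ω F to ℝ≥0 using hfin with K
  have hK : 0 < (K : ℝ) := NNReal.coe_pos.2 (ENNReal.coe_pos.1 hpos)
  have hFx₀_pos : 0 < F x₀ := hFx₀.lt_of_ne' fun h => (norm_nonneg (x - x₀)).not_gt <| by
    simpa only [h, flatScale_zero_right hs.ne', mul_zero] using hxx₀
  have hosc {m : ℕ} (hm : m ≤ lowFloor s) := norm_iteratedFDerivWithin_sub_le_of_lt_flatScale hs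
    hε.le hc₀.le hc₀ε hc₀sε hΩ hΩu hF hK hholder hflat hx₀ hFx₀_pos hx hxx₀ hm
  refine ⟨fun m hm => ?_, ?_⟩
  · rw [mul_assoc, coe_toReal, rpow_mul_rpow_eq_div_flatScale_pow hs.ne' hK hFx₀_pos]
    exact hosc hm
  · simpa only [← dist_eq_norm, dist_iteratedFDerivWithin_zero, Real.dist_eq, pow_zero, div_one]
      using hosc (Nat.zero_le _)

/-- Lemma `locally constant`(B): given `ε > 0` there is
`c₀ = c₀(ε,n,s) > 0` such that for any `0 < c ≤ c₀`, convex open `Ω`, `x₀ ∈ Ω`,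
and `F ∈ F^s(Ω)` with `K := ‖F‖_{Ċ^s(Ω)} + ‖F‖_{Ḟ^s(Ω)} > 0`:
for `x ∈ Ω` with `|x − x₀| < c (F(x₀)/K)^{1/s}` and `0 ≤ m < s`,
`|∇^m F(x) − ∇^m F(x₀)| ≤ ε K^{m/s} F(x₀)^{(s−m)/s}`; in particular
`|F(x) − F(x₀)| ≤ ε F(x₀)`. -/
theorem statement7 (ε : ℝ) (hε : 0 < ε) (n : ℕ) (hn : 1 ≤ n) (s : ℝ) (hs : 0 < s) :
    ∃ c₀ : ℝ, 0 < c₀ ∧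
      ∀ c : ℝ, 0 < c → c ≤ c₀ →
      ∀ (Ω : Set (EuclideanSpace ℝ (Fin n))), Convex ℝ Ω → IsOpen Ω →
      ∀ x₀ ∈ Ω, ∀ F : EuclideanSpace ℝ (Fin n) → ℝ, MemFs s Ω F →
        0 < holderSemi s Ω F + flatSemi s Ω F →
      ∀ x ∈ Ω,
        ‖x - x₀‖ <
          c * (F x₀ / (holderSemi s Ω F + flatSemi s Ω F).toReal) ^ (1 / s) →
        (∀ m ≤ lowFloor s,
          ‖iteratedFDerivWithin ℝ m F Ω x - iteratedFDerivWithin ℝ m F Ω x₀‖ ≤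
            ε * ((holderSemi s Ω F + flatSemi s Ω F).toReal) ^ ((m : ℝ) / s)
              * (F x₀) ^ ((s - (m : ℝ)) / s)) ∧
        |F x - F x₀| ≤ ε * F x₀ := by
  obtain ⟨c₀, hc₀, hosc⟩ := statement7_general hε hs
  refine ⟨c₀, hc₀, fun c _ hc Ω hΩ hΩo x₀ hx₀ F hF hpos x hx hxx₀ => hosc _ Ω hΩ hΩo.uniqueDiffOn
    x₀ hx₀ F hF.1.1 (hF.2.1 x₀ hx₀) hF.holderSemi_add_flatSemi_ne_top hpos x hx (hxx₀.trans_le ?_)⟩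
  exact mul_le_mul_of_nonneg_right hc (flatScale_nonneg toReal_nonneg (hF.2.1 x₀ hx₀))

end
end
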